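/- Let n ≥ 4 be even and let m > n (with m ≥ 3). Then the dihedral-type Artin groups I_2(m) and I_2(n) are not elementarily equivalent in the first-order language of groups. -/

import Mathlib

/-!
The two groups are separated by the sentence saying that, for every `g`, if `g ^ m` is central then
`g ^ (n/2)` is central.

It fails in `I₂(m)`: for the generators `x`, `y`, the power `(x * y) ^ m` is central
(it is `Δ ^ 2` with `Δ = ⟨x,y⟩ᵐ`), whereas `(x * y) ^ (n/2)` maps to the rotation `r (n/2)` of the
dihedral group of order `2m`, which is not central because `0 < n < m`
(`not_centralPow_artinI2`).

It holds in `I₂(2k)`: putting `t = x * y`, the relation says that `t ^ k` commutes with `x`, so the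
conjugates `t ^ i * x * t ^ (-i)` depend only on `i` mod `k`, and `I₂(2k)` is the semidirect product
of the free group on `ℤ/k` with `ℤ` acting by cyclic shifts of the generators (`artinEquiv`).
In that semidirect product the `k`-th power of any element is `w * c` with `w` in the free group and
`c` central; if some positive power of it is central, then a positive power of `w` lies in the
centre of the free group, which is trivial as `k ≥ 2`, so `w = 1` because free groups are
torsion-free (`centralPow_shiftGroup`).
-/

open FirstOrder FreeGroup

/-- Function symbols of the first-order language of groups: a constant `1`,
a unary function `⁻¹`, and a binary function `*`. -/
inductive GrpFunc : ℕ → Type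
  | one : GrpFunc 0
  | inv : GrpFunc 1
  | mul : GrpFunc 2

/-- The first-order language of groups. -/
def grpLang : FirstOrder.Language := ⟨GrpFunc, fun _ => Empty⟩

/-- The canonical interpretation of the language of groups in any group. -/
instance grpStructure (G : Type*) [Group G] : grpLang.Structure G where
  funMap {_} f := match f with
    | .one => fun _ => 1
    | .inv => fun v => (v 0)⁻¹
    | .mul => fun v => v 0 * v 1
  RelMap {_} r := Empty.elim r

/-- The alternating product `⟨x,y⟩^m = xyxy⋯` of length `m`. -/
def altProd {M : Type*} [Monoid M] (x y : M) : ℕ → M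
  | 0 => 1
  | k + 1 => x * altProd y x k

/-- The single relator `⟨x,y⟩ⁿ (⟨y,x⟩ⁿ)⁻¹` of the dihedral-type Artin group `I₂(n)`,
with generators `x = of 0` and `y = of 1`. -/
def ArtinI2Rels (n : ℕ) : Set (FreeGroup (Fin 2)) :=
  {altProd (of 0) (of 1) n * (altProd (of 1) (of 0) n)⁻¹}

/-- The dihedral-type Artin group `I₂(n)`. -/
abbrev ArtinI2 (n : ℕ) : Type := PresentedGroup (ArtinI2Rels n)

/-! ### The separating sentence -/

/-- The first-order property separating the groups: an element whose `m`-th power is central has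
central `k`-th power. -/
def CentralPow (m k : ℕ) (G : Type*) [Group G] : Prop :=
  ∀ g : G, (∀ h : G, g ^ m * h = h * g ^ m) → ∀ h : G, g ^ k * h = h * g ^ k

/-- The product of two terms in the language of groups. -/
def mulTerm {α : Type*} (s t : grpLang.Term α) : grpLang.Term α :=
  Language.Term.func (L := grpLang) (l := 2) GrpFunc.mul ![s, t]

/-- The `j`-th power of a term in the language of groups. -/
def powTerm {α : Type*} (t : grpLang.Term α) : ℕ → grpLang.Term α
  | 0 => Language.Term.func (L := grpLang) (l := 0) GrpFunc.one ![]
  | j + 1 => mulTerm (powTerm t j) t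

lemma realize_mulTerm {α G : Type*} [Group G] (v : α → G) (s t : grpLang.Term α) :
    (mulTerm s t).realize v = s.realize v * t.realize v := rfl

lemma realize_powTerm {α G : Type*} [Group G] (v : α → G) (t : grpLang.Term α) (j : ℕ) :
    (powTerm t j).realize v = t.realize v ^ j := by
  induction j with
  | zero => rw [pow_zero]; rfl
  | succ j ih => rw [powTerm, realize_mulTerm, ih, pow_succ]

/-- The formula in one free (de Bruijn) variable `g` saying that `g ^ j` is central. -/
def centralFormula (j : ℕ) : grpLang.BoundedFormula Empty 1 :=
  Language.BoundedFormula.all (Language.Term.bdEqual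
    (mulTerm (powTerm (Language.Term.var (Sum.inr 0)) j) (Language.Term.var (Sum.inr 1)))
    (mulTerm (Language.Term.var (Sum.inr 1)) (powTerm (Language.Term.var (Sum.inr 0)) j)))

/-- The first-order sentence expressing `CentralPow m k`. -/
def centralSentence (m k : ℕ) : grpLang.Sentence :=
  Language.BoundedFormula.all ((centralFormula m).imp (centralFormula k))

lemma realize_centralFormula {G : Type*} [Group G] (j : ℕ) (v : Empty → G) (xs : Fin 1 → G) :
    (centralFormula j).Realize v xs ↔ ∀ h : G, xs 0 ^ j * h = h * xs 0 ^ j := by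
  unfold centralFormula
  simp only [Language.BoundedFormula.realize_all, Language.BoundedFormula.realize_bdEqual,
    realize_mulTerm, realize_powTerm, Language.Term.realize_var, Sum.elim_inr]
  exact Iff.rfl

lemma realize_centralSentence (G : Type*) [Group G] (m k : ℕ) :
    G ⊨ centralSentence m k ↔ CentralPow m k G := by
  unfold centralSentence Language.Sentence.Realize Language.Formula.Realize
  simp only [Language.BoundedFormula.realize_all, Language.BoundedFormula.realize_imp,
    realize_centralFormula]
  exact Iff.rfl

lemma CentralPow.of_mulEquiv {m k : ℕ} {G H : Type*} [Group G] [Group H] (e : G ≃* H)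
    (hH : CentralPow m k H) : CentralPow m k G := by
  intro g hg h
  apply e.injective
  have := hH (e g) (fun h' => by
    obtain ⟨h', rfl⟩ := e.surjective h'
    simpa using congrArg e (hg h')) (e h)
  simpa using this

/-! ### Alternating products -/

section AltProd

variable {G : Type*} [Group G]

lemma altProd_two_mul {M : Type*} [Monoid M] (x y : M) (k : ℕ) :
    altProd x y (2 * k) = (x * y) ^ k := by
  induction k with
  | zero => rw [mul_zero, pow_zero, altProd]
  | succ k ih =>
    rw [show 2 * (k + 1) = 2 * k + 1 + 1 by ring, altProd, altProd, ih, pow_succ', mul_assoc]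

lemma altProd_two_mul_add_one {M : Type*} [Monoid M] (x y : M) (k : ℕ) :
    altProd x y (2 * k + 1) = x * (y * x) ^ k := by
  rw [altProd, altProd_two_mul]

lemma map_altProd {M N : Type*} [Monoid M] [Monoid N] (f : M →* N) (x y : M) (k : ℕ) :
    f (altProd x y k) = altProd (f x) (f y) k := by
  induction k generalizing x y with
  | zero => exact _root_.map_one f
  | succ k ih => rw [altProd, altProd, _root_.map_mul, ih]

lemma mul_mul_pow_comm (x y : G) (k : ℕ) : x * (y * x) ^ k = (x * y) ^ k * x := by
  induction k with
  | zero => simp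
  | succ k ih => rw [pow_succ, ← mul_assoc, ih, pow_succ]; simp only [mul_assoc]

/-- The relation `⟨x,y⟩ᵐ = ⟨y,x⟩ᵐ` makes `(x * y) ^ m` commute with `x`. -/
lemma commute_pow_left {x y : G} {m : ℕ} (h : altProd x y m = altProd y x m) :
    Commute ((x * y) ^ m) x := by
  rcases Nat.even_or_odd' m with ⟨l, rfl | rfl⟩
  · rw [altProd_two_mul, altProd_two_mul] at h
    have hc : Commute ((x * y) ^ l) x := by
      rw [commute_iff_eq, ← mul_mul_pow_comm, h]
    rw [mul_comm, pow_mul]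
    exact hc.pow_left 2
  · rw [altProd_two_mul_add_one, altProd_two_mul_add_one] at h
    -- conjugation by `Δ = ⟨x,y⟩ᵐ` exchanges `x` and `y`, and `(x * y) ^ m = Δ ^ 2`
    have h1 : x * (x * (y * x) ^ l) = x * (y * x) ^ l * y := by
      rw [mul_assoc x _ y, ← mul_mul_pow_comm y x, ← h]
    have h2 : y * (x * (y * x) ^ l) = x * (y * x) ^ l * x := by
      rw [mul_mul_pow_comm x y, ← mul_assoc, ← h, mul_mul_pow_comm x y]
    have h3 : (x * y) ^ (2 * l + 1) = x * (y * x) ^ l * (x * (y * x) ^ l) := by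
      have h4 : x * (y * x) ^ l * (x * (y * x) ^ l) = (x * y) ^ l * x * (y * (x * y) ^ l) := by
        rw [← h, ← mul_mul_pow_comm]
      rw [h4, show 2 * l + 1 = l + 1 + l by ring, pow_add, pow_succ]
      simp only [mul_assoc]
    generalize x * (y * x) ^ l = D at h1 h2 h3
    rw [h3, commute_iff_eq, mul_assoc, ← h2, ← mul_assoc, ← h1, mul_assoc]

end AltProd

/-! ### Failure of the sentence in `I₂(m)` -/

lemma artin_rel (n : ℕ) :
    altProd (PresentedGroup.of 0 : ArtinI2 n) (PresentedGroup.of 1) n =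
      altProd (PresentedGroup.of 1) (PresentedGroup.of 0) n := by
  have h : PresentedGroup.mk (ArtinI2Rels n)
      (altProd (of 0) (of 1) n * (altProd (of 1) (of 0) n)⁻¹) = 1 :=
    PresentedGroup.one_of_mem (Set.mem_singleton _)
  rw [_root_.map_mul, _root_.map_inv, mul_inv_eq_one, map_altProd, map_altProd] at h
  exact h

/-- The universal property of `I₂(n)`. -/
def artinLift {G : Type*} [Group G] {n : ℕ} (x y : G) (h : altProd x y n = altProd y x n) :
    ArtinI2 n →* G :=
  PresentedGroup.toGroup (f := ![x, y]) (by
    rintro r rfl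
    rw [_root_.map_mul, _root_.map_inv, mul_inv_eq_one, map_altProd, map_altProd]
    simpa using h)

@[simp]
lemma artinLift_zero {G : Type*} [Group G] {n : ℕ} (x y : G) (h : altProd x y n = altProd y x n) :
    artinLift x y h (PresentedGroup.of 0) = x := by
  simp [artinLift]

@[simp]
lemma artinLift_one {G : Type*} [Group G] {n : ℕ} (x y : G) (h : altProd x y n = altProd y x n) :
    artinLift x y h (PresentedGroup.of 1) = y := by
  simp [artinLift]

/-- The reflections `sr 0` and `sr 1` satisfy the defining relation of `I₂(j)` in the dihedral group
of order `2m` when `m` divides `j`. -/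
lemma dihedral_altProd {m j : ℕ} (hj : (j : ZMod m) = 0) :
    altProd (DihedralGroup.sr 0 : DihedralGroup m) (DihedralGroup.sr 1) j =
      altProd (DihedralGroup.sr 1) (DihedralGroup.sr 0) j := by
  rcases Nat.even_or_odd' j with ⟨l, rfl | rfl⟩
  · push_cast at hj
    rw [altProd_two_mul, altProd_two_mul]
    simp only [DihedralGroup.sr_mul_sr, DihedralGroup.r_pow, DihedralGroup.r.injEq]
    linear_combination hj
  · push_cast at hj
    rw [altProd_two_mul_add_one, altProd_two_mul_add_one]
    simp only [DihedralGroup.sr_mul_sr, DihedralGroup.r_pow, DihedralGroup.sr_mul_r,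
      DihedralGroup.sr.injEq]
    linear_combination -hj

/-- The witness is `x * y`, whose `k`-th power maps to the non-central rotation `r k` of the dihedral
group of order `2m`. -/
lemma not_centralPow_artinI2 {m k : ℕ} (hk : 0 < k) (hkm : 2 * k < m) :
    ¬ CentralPow m k (ArtinI2 m) := by
  intro H
  set x : ArtinI2 m := PresentedGroup.of 0 with hx
  set y : ArtinI2 m := PresentedGroup.of 1 with hy
  have hcx : Commute ((x * y) ^ m) x := commute_pow_left (artin_rel m)
  have hcy : Commute ((x * y) ^ m) y := by
    have h1 : Commute ((x * y) ^ m) (x * y) := (Commute.refl _).pow_left m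
    have h2 := hcx.inv_right.mul_right h1
    rwa [inv_mul_cancel_left] at h2
  have hc : ∀ h : ArtinI2 m, (x * y) ^ m * h = h * (x * y) ^ m := by
    intro h
    have hmem := PresentedGroup.generated_by (ArtinI2Rels m)
      (Subgroup.centralizer {(x * y) ^ m}) (fun j => by
        rw [Subgroup.mem_centralizer_singleton_iff]
        fin_cases j
        · exact hcx.eq.symm
        · exact hcy.eq.symm) h
    rw [Subgroup.mem_centralizer_singleton_iff] at hmem
    exact hmem.symm
  have h := congrArg (artinLift _ _ (dihedral_altProd (ZMod.natCast_self m))) (H (x * y) hc x)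
  simp only [_root_.map_mul, _root_.map_pow, hx, hy, artinLift_zero, artinLift_one,
    DihedralGroup.sr_mul_sr, DihedralGroup.r_pow, DihedralGroup.r_mul_sr, DihedralGroup.sr_mul_r,
    DihedralGroup.sr.injEq] at h
  have h0 : ((2 * k : ℕ) : ZMod m) = 0 := by
    push_cast
    linear_combination -h
  rw [ZMod.natCast_eq_zero_iff] at h0
  exact absurd (Nat.le_of_dvd (by omega) h0) (by omega)

/-! ### The centre of a free group -/

/-- A free group of rank at least two has trivial centre: if `w` starts with a letter over `i`,
then for `j ≠ i` the words `of j * w` and `w * of j` reduce to words with different first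
letters. -/
lemma FreeGroup.eq_one_of_commute_of {α : Type*} [Nontrivial α] (w : FreeGroup α)
    (h : ∀ j, Commute w (of j)) : w = 1 := by
  classical
  by_contra hw
  obtain ⟨⟨i, b⟩, L, hL⟩ := List.exists_cons_of_ne_nil (mt toWord_eq_nil_iff.1 hw)
  obtain ⟨j, hj⟩ := exists_ne i
  have h1 : (of j * w).toWord = (j, true) :: (i, b) :: L := by
    have hr : reduce w.toWord = (i, b) :: L := by rw [reduce_toWord, hL]
    rw [toWord_mul, toWord_of, List.singleton_append, reduce.cons, hr]
    simp [hj]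
  have h2 : (w * of j).toWord.Sublist (((i, b) :: L) ++ [(j, true)]) := by
    have := toWord_mul_sublist w (of j)
    rwa [hL, toWord_of] at this
  rw [(h j).eq, h1] at h2
  have h3 := h2.eq_of_length (by simp)
  simp [hj] at h3

/-! ### The structure of `I₂(2k)` -/

/-- The action of `ℤ` on the free group on `ℤ/k` by cyclic shifts of the generators. -/
def shiftAction (k : ℕ) : Multiplicative ℤ →* MulAut (FreeGroup (ZMod k)) where
  toFun a := freeGroupCongr (Equiv.addLeft ((a.toAdd : ℤ) : ZMod k))
  map_one' := by
    ext1 w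
    simp
  map_mul' a b := by
    rw [MulAut.mul_def, freeGroupCongr_trans]
    congr 1
    ext i
    simp

lemma shiftAction_of (k : ℕ) (a : Multiplicative ℤ) (i : ZMod k) :
    shiftAction k a (of i) = of (((a.toAdd : ℤ) : ZMod k) + i) := by
  simp [shiftAction]

/-- The semidirect product of the free group on `ℤ/k` with `ℤ` acting by cyclic shifts. -/
abbrev ShiftGroup (k : ℕ) : Type := FreeGroup (ZMod k) ⋊[shiftAction k] Multiplicative ℤ

lemma shiftAction_pow (k : ℕ) (a : Multiplicative ℤ) : shiftAction k (a ^ k) = 1 := by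
  ext1 w
  simp [shiftAction]

/-- `k`-th powers in the factor `ℤ` are central, since they act trivially. -/
lemma commute_inr_pow (k : ℕ) (a : Multiplicative ℤ) (g : ShiftGroup k) :
    Commute (SemidirectProduct.inr (a ^ k)) g := by
  have hz := shiftAction_pow k a
  generalize a ^ k = z at hz
  rw [commute_iff_eq]
  ext1
  · simp [hz]
  · simp [mul_comm]

/-- If `g ^ k = w * c` with `w` in the free group and `c` central, then centrality of `g ^ m` makes
`w ^ m` central in the free group, hence trivial, and torsion-freeness gives `w = 1`. -/
lemma centralPow_shiftGroup {k m : ℕ} (hk : 2 ≤ k) (hm : m ≠ 0) :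
    CentralPow m k (ShiftGroup k) := by
  have : Fact (1 < k) := ⟨hk⟩
  intro g hg
  set w := (g ^ k).left with hw
  set c : ShiftGroup k := SemidirectProduct.inr (g.right ^ k) with hc
  have hgk : g ^ k = SemidirectProduct.inl w * c := by
    have h1 : (g ^ k).right = g.right ^ k :=
      _root_.map_pow (SemidirectProduct.rightHom (φ := shiftAction k)) g k
    rw [hc, ← h1]
    exact (SemidirectProduct.inl_left_mul_inr_right _).symm
  have hcc : ∀ h, Commute c h := commute_inr_pow k g.right
  have hwm : w ^ m = 1 := by
    refine FreeGroup.eq_one_of_commute_of _ fun j => ?_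
    have h1 : Commute (SemidirectProduct.inl (w ^ m) * c ^ m)
        (SemidirectProduct.inl (of j) : ShiftGroup k) := by
      rw [_root_.map_pow, ← (hcc _).symm.mul_pow, ← hgk, ← pow_mul, mul_comm, pow_mul]
      exact Commute.pow_left (hg _) k
    have h2 := h1.mul_left ((hcc (SemidirectProduct.inl (of j))).pow_left m).inv_left
    rw [mul_inv_cancel_right, commute_iff_eq, ← _root_.map_mul, ← _root_.map_mul] at h2
    exact SemidirectProduct.inl_injective h2
  have hw1 : w = 1 := (pow_eq_one_iff_left hm).1 hwm
  intro h
  rw [hgk, hw1, _root_.map_one, one_mul]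
  exact hcc h

section Equiv

variable {G : Type*} [Group G]

/-- If `t ^ k` commutes with `x`, then `t ^ a * x * t ^ (-a)` depends only on `a` mod `k`. -/
lemma conj_zpow_eq {x t : G} {k : ℕ} (h : Commute (t ^ k) x) {a b : ℤ}
    (hab : (a : ZMod k) = b) : t ^ a * x * (t ^ a)⁻¹ = t ^ b * x * (t ^ b)⁻¹ := by
  rw [ZMod.intCast_eq_intCast_iff_dvd_sub] at hab
  obtain ⟨c, hc⟩ := hab
  obtain rfl : b = a + k * c := by linarith
  have h1 : Commute (t ^ ((k : ℤ) * c)) x := by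
    rw [zpow_mul, zpow_natCast]
    exact h.zpow_left c
  rw [zpow_add, mul_assoc _ _ x, h1.eq]
  group

/-- The homomorphism from the shift group given by elements `x`, `t` with `t ^ k` commuting
with `x`; it sends the generator `i` to `t ^ i * x * t ^ (-i)`. -/
def shiftLift {k : ℕ} (x t : G) (h : Commute (t ^ k) x) : ShiftGroup k →* G :=
  SemidirectProduct.lift
    (FreeGroup.lift fun i : ZMod k => t ^ (i.cast : ℤ) * x * (t ^ (i.cast : ℤ))⁻¹)
    (zpowersHom G t) (by
      intro a
      ext i
      simp only [MonoidHom.comp_apply, MulEquiv.coe_toMonoidHom, shiftAction_of, lift_apply_of,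
        MulAut.conj_apply, zpowersHom_apply]
      rw [conj_zpow_eq h (b := a.toAdd + i.cast) (by simp), zpow_add]
      group)

end Equiv

lemma shift_conj (k : ℕ) (a : ℤ) (i : ZMod k) :
    (SemidirectProduct.inr (Multiplicative.ofAdd 1) : ShiftGroup k) ^ a *
      SemidirectProduct.inl (of i) * (SemidirectProduct.inr (Multiplicative.ofAdd 1) ^ a)⁻¹ =
      SemidirectProduct.inl (of ((a : ZMod k) + i)) := by
  rw [← _root_.map_zpow, ← _root_.map_inv, ← SemidirectProduct.inl_aut, shiftAction_of]
  simp

/-- `I₂(2k)` is the semidirect product of a free group of rank `k` with `ℤ` acting by cyclic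
shifts: `x` corresponds to the generator `0`, and `x * y` to the generator of `ℤ`. -/
def artinEquiv (k : ℕ) : ArtinI2 (2 * k) ≃* ShiftGroup k :=
  MonoidHom.toMulEquiv
    (artinLift (SemidirectProduct.inl (of 0))
      ((SemidirectProduct.inl (of 0))⁻¹ * SemidirectProduct.inr (Multiplicative.ofAdd 1)) (by
        have hc := commute_inr_pow k (Multiplicative.ofAdd 1) (SemidirectProduct.inl (of 0))
        rw [_root_.map_pow] at hc
        rw [altProd_two_mul, altProd_two_mul, mul_inv_cancel_left]
        set X : ShiftGroup k := SemidirectProduct.inl (of 0)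
        have := conj_pow (i := k) (a := X⁻¹)
          (b := (SemidirectProduct.inr (Multiplicative.ofAdd 1) : ShiftGroup k))
        rw [inv_inv] at this
        rw [this, mul_assoc, hc.eq, inv_mul_cancel_left]))
    (shiftLift (PresentedGroup.of 0) (PresentedGroup.of 0 * PresentedGroup.of 1) (by
      have h := artin_rel (2 * k)
      rw [altProd_two_mul, altProd_two_mul] at h
      rw [commute_iff_eq, ← mul_mul_pow_comm, h]))
    (by
      ext j
      fin_cases j
      · simp [shiftLift]
      · simp [shiftLift])
    (by
      apply SemidirectProduct.hom_ext
      · ext1 i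
        simp only [shiftLift, MonoidHom.comp_apply, SemidirectProduct.lift_inl, lift_apply_of,
          _root_.map_mul, _root_.map_inv, _root_.map_zpow, artinLift_zero, artinLift_one, mul_inv_cancel_left,
          MonoidHom.id_apply]
        rw [shift_conj]
        simp
      · ext
        all_goals simp [shiftLift])

/-- For even `n ≥ 4` and any `m > n` (with `m ≥ 3`), the dihedral-type Artin groups
`I₂(m)` and `I₂(n)` are not elementarily equivalent in the first-order language of groups. -/
theorem artinI2_even_not_elementarilyEquivalent (n m : ℕ) (hn : 4 ≤ n) (hne : Even n)
    (hm : 3 ≤ m) (hnm : n < m) :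
    ¬ grpLang.ElementarilyEquivalent (ArtinI2 m) (ArtinI2 n) := by
  obtain ⟨k, rfl⟩ := hne.two_dvd
  intro h
  have hs := (Language.elementarilyEquivalent_iff.1 h) (centralSentence m k)
  rw [realize_centralSentence, realize_centralSentence] at hs
  exact not_centralPow_artinI2 (by omega) hnm
    (hs.2 ((centralPow_shiftGroup (by omega) (by omega)).of_mulEquiv (artinEquiv k)))
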